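/- Let Ω ⊆ ℝ³ be open, α > −1, and fix η ∈ C_0^∞(B_{5/3}) with η = 1 on B_{4/3}; set η_ρ(x) = η(x/ρ). There exists a constant c > 0, depending only on α and η, with the following property: if ρ > 0 and u ∈ H̊¹(Ω;ℝ³) satisfies Lu = 0 on Ω∩B_{2ρ}, then for every y ∈ B_ρ, ∫_Ω [L(u η_ρ)(x)] · (Φ(x−y) u(x) η_ρ(x)) dx ≤ c · m_ρ(u). -/

import Mathlib

/-!
Where `Lu = 0`, the field `L(u η_ρ)` is the commutator of `L` with `η_ρ`, which involves only `u`,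
`Du` and the derivatives of `η_ρ`. The integrand therefore vanishes for `|x| < 4ρ/3`, and for
`|x| > 5ρ/3` because of the factor `η_ρ`; in between `|x - y| ≥ ρ/3`, so that `Φ(x - y) = O(ρ⁻¹)`
and the integrand is at most `C ρ⁻³ (|u|² + ρ² |Du|²)`.

The gradient is removed by a Caccioppoli inequality. Write `-L u = div σ(Du)` with the stress
`σ(A) = A + s Aᵀ + (α - s) (tr A) I`, where `s` is arbitrary because null Lagrangians do not change
the equation. For `s = ε - 1`,
`σ(A) : A = ε |A|² + (1 - ε)/2 |A - Aᵀ|² + (1 + α - ε) (tr A)²`,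
which is coercive when `ε = min 1 (1 + α)`, and thus for every `α > -1`. For a cutoff `ζ` and
`T = u ⊗ ∇ζ`, completing the square gives
`σ(D(ζu)) : D(ζu) = σ(Du) : D(ζ²u) + σ(T) : T`,
in which the first term on the right integrates to zero by the equation.
-/

open MeasureTheory Metric Real Filter

noncomputable section

/-- `ℝ³` as Euclidean space. -/
abbrev E3 : Type := EuclideanSpace ℝ (Fin 3)

/-- Partial derivative `∂ᵢ f` on `ℝ³`. -/
def pd (i : Fin 3) (f : E3 → ℝ) (x : E3) : ℝ :=
  fderiv ℝ f x (EuclideanSpace.single i 1)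

/-- Laplacian on `ℝ³`. -/
def lap (f : E3 → ℝ) (x : E3) : ℝ := ∑ i, pd i (pd i f) x

/-- Divergence of a vector field on `ℝ³`. -/
def divg (u : E3 → Fin 3 → ℝ) (x : E3) : ℝ := ∑ k, pd k (fun y => u y k) x

/-- The 3D Lamé operator `(Lu)ᵢ = -Δuᵢ - α ∂ᵢ (div u)`. -/
def lame (α : ℝ) (u : E3 → Fin 3 → ℝ) (x : E3) (i : Fin 3) : ℝ :=
  - lap (fun y => u y i) x - α * pd i (divg u) x

/-- The constant `c_α = (α+2)/(8π(α+1))`. -/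
def cA (α : ℝ) : ℝ := (α + 2) / (8 * Real.pi * (α + 1))

/-- The fundamental matrix `Φ` of the 3D Lamé system:
`Φ_ij(x) = c_α |x|⁻¹ (δ_ij + (α/(α+2)) xᵢxⱼ/|x|²)`. -/
def Phi (α : ℝ) (x : E3) (i j : Fin 3) : ℝ :=
  cA α * ‖x‖⁻¹ * ((if i = j then (1 : ℝ) else 0) + (α / (α + 2)) * (x i * x j) / ‖x‖ ^ 2)

/-- `u ∈ C₀^∞(U; ℝ³)`: smooth, compactly supported, with support inside `U`. -/
def IsTestOn (U : Set E3) (u : E3 → Fin 3 → ℝ) : Prop :=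
  ContDiff ℝ (⊤ : ℕ∞) u ∧ HasCompactSupport u ∧ tsupport u ⊆ U

/-- `∫_{ℝ³} (Lu)·(Φ(·-y) u) dx`. -/
def lameEnergy (α : ℝ) (u : E3 → Fin 3 → ℝ) (y : E3) : ℝ :=
  ∫ x : E3, ∑ i, ∑ j, lame α u x i * Phi α (x - y) i j * u x j

/-- `u ∈ H̊¹(Ω; ℝ³)`: `u` is smooth on `Ω`, `∫_Ω (|u|² + |Du|²) < ∞`, and `u` is
approximated in this norm by test fields supported in `Ω`. -/
def MemH10 (Ω : Set E3) (u : E3 → Fin 3 → ℝ) : Prop :=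
  ContDiffOn ℝ (⊤ : ℕ∞) u Ω ∧
  IntegrableOn (fun x => (∑ i, (u x i) ^ 2) +
    ∑ i, ∑ k, (pd k (fun z => u z i) x) ^ 2) Ω volume ∧
  ∃ un : ℕ → E3 → Fin 3 → ℝ, (∀ n, IsTestOn Ω (un n)) ∧
    Tendsto (fun n => ∫ x in Ω, ((∑ i, (u x i - un n x i) ^ 2) +
      ∑ i, ∑ k, (pd k (fun z => u z i - un n z i) x) ^ 2)) atTop (nhds 0)

/-- `m_ρ(u) = ρ⁻³ ∫_{Ω ∩ S_ρ} |u|² dx`, where `S_ρ = {ρ < |x| < 2ρ}`. -/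
def mRho (Ω : Set E3) (ρ : ℝ) (u : E3 → Fin 3 → ℝ) : ℝ :=
  (ρ ^ 3)⁻¹ * ∫ x in Ω ∩ {x : E3 | ρ < ‖x‖ ∧ ‖x‖ < 2 * ρ}, ∑ i, (u x i) ^ 2

/-- `M_ρ(u) = ρ⁻³ ∫_{Ω ∩ B_ρ} |u|² dx`. -/
def MRho (Ω : Set E3) (ρ : ℝ) (u : E3 → Fin 3 → ℝ) : ℝ :=
  (ρ ^ 3)⁻¹ * ∫ x in Ω ∩ ball (0 : E3) ρ, ∑ i, (u x i) ^ 2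

open scoped Matrix ContDiff

section MatrixNorms

open Matrix

variable {m n : Type*} [Fintype m] [Fintype n]

/-- The squared Euclidean norm `|v|²` of a vector given by its coordinates; the type `n → ℝ` itself
carries the supremum norm. -/
def sqNorm (v : n → ℝ) : ℝ := ∑ i, v i ^ 2

/-- The squared Frobenius norm `|A|²` of a matrix. -/
def frobSq (A : Matrix m n ℝ) : ℝ := ∑ i, sqNorm (A i)

lemma sqNorm_nonneg (v : n → ℝ) : 0 ≤ sqNorm v :=
  Finset.sum_nonneg fun _ _ => sq_nonneg _

lemma frobSq_nonneg (A : Matrix m n ℝ) : 0 ≤ frobSq A :=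
  Finset.sum_nonneg fun _ _ => sqNorm_nonneg _

lemma sq_apply_le_sqNorm (v : n → ℝ) (i : n) : v i ^ 2 ≤ sqNorm v :=
  Finset.single_le_sum (f := fun k => v k ^ 2) (fun _ _ => sq_nonneg _) (Finset.mem_univ i)

lemma sqNorm_apply_le_frobSq (A : Matrix m n ℝ) (i : m) : sqNorm (A i) ≤ frobSq A :=
  Finset.single_le_sum (f := fun k => sqNorm (A k)) (fun _ _ => sqNorm_nonneg _)
    (Finset.mem_univ i)

lemma sqNorm_smul (c : ℝ) (v : n → ℝ) : sqNorm (c • v) = c ^ 2 * sqNorm v := by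
  simp only [sqNorm, Pi.smul_apply, smul_eq_mul, mul_pow, Finset.mul_sum]

lemma frobSq_smul (c : ℝ) (A : Matrix m n ℝ) : frobSq (c • A) = c ^ 2 * frobSq A := by
  simp only [frobSq, Finset.mul_sum, ← sqNorm_smul]
  rfl

lemma sqNorm_add_le (v w : n → ℝ) : sqNorm (v + w) ≤ 2 * (sqNorm v + sqNorm w) := by
  simp only [sqNorm, ← Finset.sum_add_distrib, Finset.mul_sum]
  exact Finset.sum_le_sum fun i _ => add_sq_le

lemma frobSq_add_le (A B : Matrix m n ℝ) : frobSq (A + B) ≤ 2 * (frobSq A + frobSq B) := by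
  simp only [frobSq, ← Finset.sum_add_distrib, Finset.mul_sum]
  exact Finset.sum_le_sum fun i _ => sqNorm_add_le (A i) (B i)

lemma frobSq_transpose (A : Matrix m n ℝ) : frobSq Aᵀ = frobSq A :=
  Finset.sum_comm

lemma frobSq_vecMulVec (v : m → ℝ) (g : n → ℝ) :
    frobSq (vecMulVec v g) = sqNorm v * sqNorm g := by
  simp only [frobSq, sqNorm, vecMulVec_apply, mul_pow, Finset.sum_mul_sum]

lemma frobSq_eq_trace (A : Matrix m n ℝ) : frobSq A = (Aᵀ * A).trace := by
  rw [← frobSq_transpose]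
  simp only [frobSq, sqNorm, trace, diag_apply, mul_apply, transpose_apply, sq]

lemma frobSq_one [DecidableEq n] : frobSq (1 : Matrix n n ℝ) = Fintype.card n := by
  rw [frobSq_eq_trace, transpose_one, Matrix.one_mul, trace_one]

lemma dotProduct_sq_le (v w : n → ℝ) : (v ⬝ᵥ w) ^ 2 ≤ sqNorm v * sqNorm w :=
  Finset.sum_mul_sq_le_sq_mul_sq _ _ _

lemma sqNorm_mulVec_le (A : Matrix m n ℝ) (v : n → ℝ) :
    sqNorm (A *ᵥ v) ≤ frobSq A * sqNorm v := by
  rw [frobSq, Finset.sum_mul]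
  exact Finset.sum_le_sum fun i _ => dotProduct_sq_le (A i) v

lemma dotProduct_mulVec_sq_le (v : m → ℝ) (A : Matrix m n ℝ) (w : n → ℝ) :
    (v ⬝ᵥ A *ᵥ w) ^ 2 ≤ sqNorm v * (frobSq A * sqNorm w) :=
  (dotProduct_sq_le v _).trans
    (mul_le_mul_of_nonneg_left (sqNorm_mulVec_le A w) (sqNorm_nonneg v))

lemma trace_sq_le (A : Matrix n n ℝ) : A.trace ^ 2 ≤ Fintype.card n * frobSq A :=
  calc A.trace ^ 2 ≤ Fintype.card n * ∑ i, A i i ^ 2 := sq_sum_le_card_mul_sum_sq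
    _ ≤ Fintype.card n * frobSq A := by
      gcongr
      exact Finset.sum_le_sum fun i _ => sq_apply_le_sqNorm (A i) i

end MatrixNorms

section LameForm

open Matrix

variable {n : Type*} [Fintype n] [DecidableEq n]

/-- The stress `σ(A) = A + s Aᵀ + (α - s) (tr A) I` of a displacement gradient `A = Du`, where
`Aᵢⱼ = ∂ⱼuᵢ`. For every value of the free parameter `s` its row divergence is `-Lu`; changing `s`
amounts to adding a null Lagrangian to the energy density `σ(A) : A`. -/
def stress (α s : ℝ) (A : Matrix n n ℝ) : Matrix n n ℝ :=
  A + s • Aᵀ + ((α - s) * A.trace) • 1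

/-- The bilinear form `σ(A) : B`, whose integral with `A = Du`, `B = Dw` is the weak form of the
Lamé operator. -/
def lameForm (α s : ℝ) (A B : Matrix n n ℝ) : ℝ := ∑ i, ∑ j, stress α s A i j * B i j

variable (α s : ℝ)

lemma stress_apply (A : Matrix n n ℝ) (i j : n) :
    stress α s A i j = A i j + s * A j i + (α - s) * A.trace * (1 : Matrix n n ℝ) i j := rfl

lemma lameForm_eq_trace (A B : Matrix n n ℝ) :
    lameForm α s A B =
      (Aᵀ * B).trace + s * (A * B).trace + (α - s) * (A.trace * B.trace) := by
  have hAB : lameForm α s A B = ((stress α s A)ᵀ * B).trace := by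
    rw [lameForm, Finset.sum_comm]; rfl
  rw [hAB, stress]
  simp only [transpose_add, transpose_smul, transpose_transpose, transpose_one, Matrix.add_mul,
    smul_mul, Matrix.one_mul, trace_add, trace_smul, smul_eq_mul]
  ring

lemma lameForm_add_smul_self (A T : Matrix n n ℝ) (z : ℝ) :
    lameForm α s (z • A + T) (z • A + T) =
      lameForm α s A (z ^ 2 • A + (2 * z) • T) + lameForm α s T T := by
  have hT : (Tᵀ * A).trace = (Aᵀ * T).trace := by
    rw [← trace_transpose, transpose_mul, transpose_transpose]
  simp only [lameForm_eq_trace, transpose_add, transpose_smul, Matrix.add_mul, Matrix.mul_add,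
    smul_mul, Matrix.mul_smul, trace_add, trace_smul, smul_eq_mul, hT, trace_mul_comm T A]
  ring

lemma lameForm_vecMulVec_le (v g : n → ℝ) :
    lameForm α s (vecMulVec v g) (vecMulVec v g) ≤ (1 + |α|) * (sqNorm v * sqNorm g) := by
  have hform : lameForm α s (vecMulVec v g) (vecMulVec v g) =
      sqNorm v * sqNorm g + α * (v ⬝ᵥ g) ^ 2 := by
    rw [lameForm_eq_trace, ← frobSq_eq_trace, frobSq_vecMulVec, vecMulVec_mul_vecMulVec,
      trace_vecMulVec, trace_vecMulVec]
    simp only [dotProduct_smul, smul_eq_mul, dotProduct_comm g v]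
    ring
  have hα : α * (v ⬝ᵥ g) ^ 2 ≤ |α| * (sqNorm v * sqNorm g) :=
    mul_le_mul (le_abs_self α) (dotProduct_sq_le v g) (sq_nonneg _) (abs_nonneg α)
  linarith

variable {α} {ε : ℝ}

lemma le_lameForm_self (hε : ε ≤ 1) (hεα : ε ≤ 1 + α) (A : Matrix n n ℝ) :
    ε * frobSq A ≤ lameForm α (ε - 1) A A := by
  have hskew : frobSq (A - Aᵀ) = 2 * (frobSq A - (A * A).trace) := by
    have htr : (Aᵀ * Aᵀ).trace = (A * A).trace := by
      rw [← transpose_mul, trace_transpose]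
    simp only [frobSq_eq_trace, transpose_sub, transpose_transpose, Matrix.sub_mul,
      Matrix.mul_sub, trace_sub, htr, trace_mul_comm A Aᵀ]
    ring
  have hform : lameForm α (ε - 1) A A =
      ε * frobSq A + (1 - ε) / 2 * frobSq (A - Aᵀ) + (1 + α - ε) * A.trace ^ 2 := by
    rw [lameForm_eq_trace, hskew, ← frobSq_eq_trace]
    ring
  have hcurl := mul_nonneg (by linarith : 0 ≤ (1 - ε) / 2) (frobSq_nonneg (A - Aᵀ))
  have hdiv := mul_nonneg (sub_nonneg.2 hεα) (sq_nonneg A.trace)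
  linarith

lemma le_lameForm_cutoff (hε₀ : 0 ≤ ε) (hε : ε ≤ 1) (hεα : ε ≤ 1 + α) (A : Matrix n n ℝ)
    (v g : n → ℝ) (z : ℝ) :
    ε / 2 * (z ^ 2 * frobSq A) ≤
      lameForm α (ε - 1) A (z ^ 2 • A + (2 * z) • vecMulVec v g) +
        (2 + |α|) * (sqNorm v * sqNorm g) := by
  set T := vecMulVec v g
  have hcoercive := le_lameForm_self hε hεα (z • A + T)
  rw [lameForm_add_smul_self] at hcoercive
  have hT := lameForm_vecMulVec_le α (ε - 1) v g
  have hsplit : z ^ 2 * frobSq A ≤ 2 * (frobSq (z • A + T) + sqNorm v * sqNorm g) :=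
    calc z ^ 2 * frobSq A = frobSq (z • A) := (frobSq_smul z A).symm
      _ = frobSq (z • A + T + (-1 : ℝ) • T) := by
        rw [neg_one_smul, add_neg_cancel_right]
      _ ≤ 2 * (frobSq (z • A + T) + frobSq ((-1 : ℝ) • T)) := frobSq_add_le _ _
      _ = _ := by rw [frobSq_smul, neg_one_sq, one_mul, frobSq_vecMulVec]
  have hvg := mul_nonneg (sqNorm_nonneg v) (sqNorm_nonneg g)
  nlinarith

/-- The commutator term in `L(hu) = h Lu - lameCommutator α u ∇h Du D²h`, as a function of the
values `v = u(x)`, `g = ∇h(x)`, `G = Du(x)`, `H = D²h(x)`. -/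
def lameCommutator (α : ℝ) (v g : n → ℝ) (G H : Matrix n n ℝ) : n → ℝ :=
  (H.trace • 1 + α • Hᵀ) *ᵥ v + ((2 : ℝ) • G + α • (G.trace • 1 + Gᵀ)) *ᵥ g

lemma lameCommutator_apply (α : ℝ) (v g : n → ℝ) (G H : Matrix n n ℝ) (i : n) :
    lameCommutator α v g G H i = H.trace * v i + α * ∑ k, H k i * v k +
      (2 * (G i ⬝ᵥ g) + α * (G.trace * g i + ∑ k, G k i * g k)) := by
  simp only [lameCommutator, add_mulVec, smul_mulVec, one_mulVec]
  rfl

lemma frobSq_trace_smul_one_le (A : Matrix n n ℝ) :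
    frobSq (A.trace • (1 : Matrix n n ℝ)) ≤ Fintype.card n ^ 2 * frobSq A := by
  rw [frobSq_smul, frobSq_one, sq (Fintype.card n : ℝ), mul_right_comm]
  gcongr
  exact trace_sq_le A

lemma sqNorm_lameCommutator_le (α : ℝ) (v g : n → ℝ) (G H : Matrix n n ℝ) :
    sqNorm (lameCommutator α v g G H) ≤ 16 * (1 + Fintype.card n ^ 2) * (1 + α ^ 2) *
      (frobSq H * sqNorm v + frobSq G * sqNorm g) := by
  set N := (Fintype.card n : ℝ)
  have hH : frobSq (H.trace • 1 + α • Hᵀ) ≤ 2 * (N ^ 2 + α ^ 2) * frobSq H := by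
    have hadd := frobSq_add_le (H.trace • 1) (α • Hᵀ)
    rw [frobSq_smul α, frobSq_transpose] at hadd
    linarith [frobSq_trace_smul_one_le H]
  have hG : frobSq ((2 : ℝ) • G + α • (G.trace • 1 + Gᵀ)) ≤
      2 * (4 + α ^ 2 * (2 * (N ^ 2 + 1))) * frobSq G := by
    have hadd := frobSq_add_le ((2 : ℝ) • G) (α • (G.trace • 1 + Gᵀ))
    have hinner := frobSq_add_le (G.trace • 1) Gᵀ
    rw [frobSq_smul, frobSq_smul] at hadd
    rw [frobSq_transpose] at hinner
    nlinarith [mul_le_mul_of_nonneg_left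
      (hinner.trans (by linarith [frobSq_trace_smul_one_le G] :
        _ ≤ 2 * (N ^ 2 + 1) * frobSq G)) (sq_nonneg α)]
  have hHv : 0 ≤ frobSq H * sqNorm v := mul_nonneg (frobSq_nonneg H) (sqNorm_nonneg v)
  have hGg : 0 ≤ frobSq G * sqNorm g := mul_nonneg (frobSq_nonneg G) (sqNorm_nonneg g)
  calc _ ≤ 2 * (2 * (N ^ 2 + α ^ 2) * frobSq H * sqNorm v +
        2 * (4 + α ^ 2 * (2 * (N ^ 2 + 1))) * frobSq G * sqNorm g) := by
        refine (sqNorm_add_le _ _).trans ?_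
        gcongr
        · exact (sqNorm_mulVec_le _ v).trans (mul_le_mul_of_nonneg_right hH (sqNorm_nonneg v))
        · exact (sqNorm_mulVec_le _ g).trans (mul_le_mul_of_nonneg_right hG (sqNorm_nonneg g))
    _ = 4 * (N ^ 2 + α ^ 2) * (frobSq H * sqNorm v) +
        (16 + 8 * α ^ 2 * (N ^ 2 + 1)) * (frobSq G * sqNorm g) := by ring
    _ ≤ 16 * (1 + N ^ 2) * (1 + α ^ 2) * (frobSq H * sqNorm v) +
        16 * (1 + N ^ 2) * (1 + α ^ 2) * (frobSq G * sqNorm g) := by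
        have hNα := mul_nonneg (sq_nonneg N) (sq_nonneg α)
        exact add_le_add
          (mul_le_mul_of_nonneg_right (by linarith [sq_nonneg N, sq_nonneg α]) hHv)
          (mul_le_mul_of_nonneg_right (by linarith [sq_nonneg N, sq_nonneg α]) hGg)
    _ = _ := by ring

end LameForm

section PartialDerivatives

variable {f g : E3 → ℝ} {x : E3}

lemma pd_congr (hfg : f =ᶠ[nhds x] g) (i : Fin 3) : pd i f =ᶠ[nhds x] pd i g :=
  hfg.fderiv.mono fun _ hy => congrArg (fun T : E3 →L[ℝ] ℝ => T (EuclideanSpace.single i 1)) hy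

lemma pd_add (hf : DifferentiableAt ℝ f x) (hg : DifferentiableAt ℝ g x) (i : Fin 3) :
    pd i (fun z => f z + g z) x = pd i f x + pd i g x := by
  simp only [pd, fderiv_fun_add hf hg, add_apply]

lemma pd_sub (hf : DifferentiableAt ℝ f x) (hg : DifferentiableAt ℝ g x) (i : Fin 3) :
    pd i (fun z => f z - g z) x = pd i f x - pd i g x := by
  simp only [pd, fderiv_fun_sub hf hg, sub_apply]

lemma pd_mul (hf : DifferentiableAt ℝ f x) (hg : DifferentiableAt ℝ g x) (i : Fin 3) :
    pd i (fun z => f z * g z) x = f x * pd i g x + g x * pd i f x := by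
  simp only [pd, fderiv_fun_mul hf hg, add_apply, smul_apply, smul_eq_mul]

lemma pd_const_mul (f : E3 → ℝ) (c : ℝ) (i : Fin 3) (x : E3) :
    pd i (fun z => c * f z) x = c * pd i f x :=
  congrArg (fun T : E3 →L[ℝ] ℝ => T (EuclideanSpace.single i 1))
    (congrFun (fderiv_const_smul_field (f := f) c) x)

lemma pd_sum {ι : Type*} (s : Finset ι) {F : ι → E3 → ℝ}
    (hF : ∀ k ∈ s, DifferentiableAt ℝ (F k) x) (i : Fin 3) :
    pd i (fun z => ∑ k ∈ s, F k z) x = ∑ k ∈ s, pd i (F k) x := by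
  simp only [pd, fderiv_fun_sum hF, sum_apply]

lemma pd_comp_smul (f : E3 → ℝ) (a : ℝ) (i : Fin 3) (x : E3) :
    pd i (fun z => f (a • z)) x = a * pd i f (a • x) := by
  simp only [pd, fderiv_comp_smul, smul_apply, smul_eq_mul]

lemma contDiffAt_pd {m n : WithTop ℕ∞} (hf : ContDiffAt ℝ n f x) (hmn : m + 1 ≤ n) (i : Fin 3) :
    ContDiffAt ℝ m (pd i f) x :=
  (hf.fderiv_right hmn).clm_apply contDiffAt_const

lemma differentiableAt_pd (hf : ContDiffAt ℝ 2 f x) (i : Fin 3) : DifferentiableAt ℝ (pd i f) x :=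
  (contDiffAt_pd (m := 1) hf one_add_one_eq_two.le i).differentiableAt one_ne_zero

lemma contDiff_pd (hf : ContDiff ℝ ∞ f) (i : Fin 3) : ContDiff ℝ ∞ (pd i f) :=
  contDiff_iff_contDiffAt.2 fun _ => contDiffAt_pd hf.contDiffAt le_rfl i

lemma hasCompactSupport_pd (hf : HasCompactSupport f) (i : Fin 3) : HasCompactSupport (pd i f) :=
  hf.fderiv_apply ℝ _

lemma pd_comm (hf : ContDiffAt ℝ 2 f x) (i j : Fin 3) : pd i (pd j f) x = pd j (pd i f) x := by
  have hdiff : DifferentiableAt ℝ (fderiv ℝ f) x :=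
    (hf.fderiv_right (m := 1) one_add_one_eq_two.le).differentiableAt one_ne_zero
  have hpd : ∀ a b : Fin 3, pd a (pd b f) x =
      fderiv ℝ (fderiv ℝ f) x (EuclideanSpace.single a 1) (EuclideanSpace.single b 1) := by
    intro a b
    change fderiv ℝ (fun y => fderiv ℝ f y (EuclideanSpace.single b 1)) x _ = _
    rw [fderiv_clm_apply hdiff (differentiableAt_const _)]
    simp
  rw [hpd, hpd]
  exact hf.isSymmSndFDerivAt (by simp) _ _

lemma eventually_differentiableAt (hf : ContDiffAt ℝ 2 f x) :
    ∀ᶠ z in nhds x, DifferentiableAt ℝ f z :=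
  (hf.eventually (by simp)).mono fun _ hz => hz.differentiableAt two_ne_zero

lemma pd_pd_mul (hf : ContDiffAt ℝ 2 f x) (hg : ContDiffAt ℝ 2 g x) (i j : Fin 3) :
    pd i (pd j fun z => f z * g z) x =
      f x * pd i (pd j g) x + pd j g x * pd i f x +
        (g x * pd i (pd j f) x + pd j f x * pd i g x) := by
  have hfd := hf.differentiableAt two_ne_zero
  have hgd := hg.differentiableAt two_ne_zero
  have hfg : (pd j fun z => f z * g z) =ᶠ[nhds x] fun z => f z * pd j g z + g z * pd j f z := by
    filter_upwards [eventually_differentiableAt hf, eventually_differentiableAt hg]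
      with z hfz hgz using pd_mul hfz hgz j
  rw [(pd_congr hfg i).eq_of_nhds, pd_add (hfd.fun_mul (differentiableAt_pd hg j))
      (hgd.fun_mul (differentiableAt_pd hf j)),
    pd_mul hfd (differentiableAt_pd hg j), pd_mul hgd (differentiableAt_pd hf j)]

/-- The gradient `∇f`, as a vector of partial derivatives. -/
def grad (f : E3 → ℝ) (x : E3) : Fin 3 → ℝ := fun j => pd j f x

/-- The Jacobian matrix `Du` of a vector field, with entries `(Du)ᵢⱼ = ∂ⱼuᵢ`; the Hessian of a
function `h` is `jac (grad h)`. -/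
def jac (u : E3 → Fin 3 → ℝ) (x : E3) : Matrix (Fin 3) (Fin 3) ℝ :=
  Matrix.of fun i j => pd j (fun z => u z i) x

lemma jac_apply (u : E3 → Fin 3 → ℝ) (x : E3) (i j : Fin 3) :
    jac u x i j = pd j (fun z => u z i) x := rfl

variable {u : E3 → Fin 3 → ℝ}

lemma jac_mul (hu : DifferentiableAt ℝ u x) (hf : DifferentiableAt ℝ f x) :
    jac (fun z k => u z k * f z) x = f x • jac u x + Matrix.vecMulVec (u x) (grad f x) := by
  ext i j
  rw [jac_apply, pd_mul (differentiableAt_pi.1 hu i) hf, add_comm]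
  rfl

end PartialDerivatives

section LameOperator

open Matrix

variable {α : ℝ} {u : E3 → Fin 3 → ℝ} {x : E3}

lemma lame_congr {v : E3 → Fin 3 → ℝ} (huv : u =ᶠ[nhds x] v) (i : Fin 3) :
    lame α u x i = lame α v x i := by
  have hcomp : ∀ k, (fun z => u z k) =ᶠ[nhds x] fun z => v z k := fun k =>
    huv.mono fun z hz => congrFun hz k
  have hlap : lap (fun z => u z i) x = lap (fun z => v z i) x :=
    Finset.sum_congr rfl fun j _ => (pd_congr (pd_congr (hcomp i) j) j).eq_of_nhds
  have hdivg : divg u =ᶠ[nhds x] divg v := by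
    filter_upwards [eventually_all.2 fun k => pd_congr (hcomp k) k] with z hz
    exact Finset.sum_congr rfl fun k _ => hz k
  rw [lame, lame, hlap, (pd_congr hdivg i).eq_of_nhds]

lemma pd_divg (hu : ContDiffAt ℝ 2 u x) (i : Fin 3) :
    pd i (divg u) x = ∑ k, pd i (pd k fun z => u z k) x :=
  pd_sum _ (fun k _ => differentiableAt_pd (contDiffAt_pi.1 hu k) k) i

lemma lame_eq_neg_div_stress (hu : ContDiffAt ℝ 2 u x) (s : ℝ) (i : Fin 3) :
    lame α u x i = -∑ j, pd j (fun z => stress α s (jac u z) i j) x := by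
  have hcomp := contDiffAt_pi.1 hu
  have hpd : ∀ k l, DifferentiableAt ℝ (pd l fun z => u z k) x := fun k l =>
    differentiableAt_pd (hcomp k) l
  have hdivg : DifferentiableAt ℝ (divg u) x := DifferentiableAt.fun_sum fun k _ => hpd k k
  have hstress : ∀ j, pd j (fun z => stress α s (jac u z) i j) x =
      pd j (pd j fun z => u z i) x + s * pd i (pd j fun z => u z j) x +
        (α - s) * (1 : Matrix (Fin 3) (Fin 3) ℝ) i j * pd j (divg u) x := by
    intro j
    have hexpand : (fun z => stress α s (jac u z) i j) = fun z =>
        pd j (fun y => u y i) z + s * pd i (fun y => u y j) z +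
          (α - s) * (1 : Matrix (Fin 3) (Fin 3) ℝ) i j * divg u z := by
      funext z
      rw [stress_apply, mul_right_comm]
      rfl
    rw [hexpand, pd_add ((hpd i j).fun_add ((hpd j i).const_mul s)) (hdivg.const_mul _),
      pd_add (hpd i j) ((hpd j i).const_mul s), pd_const_mul, pd_const_mul]
    exact congrArg (fun t => _ + s * t + _) (pd_comm (hcomp j) j i)
  simp only [hstress, Finset.sum_add_distrib, ← Finset.mul_sum, ← pd_divg hu, one_apply, mul_ite,
    mul_one, mul_zero, ite_mul, zero_mul, Finset.sum_ite_eq, Finset.mem_univ, if_true, lame, lap]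
  ring

lemma lap_mul {f g : E3 → ℝ} (hf : ContDiffAt ℝ 2 f x) (hg : ContDiffAt ℝ 2 g x) :
    lap (fun z => f z * g z) x = f x * lap g x + 2 * (grad f x ⬝ᵥ grad g x) + g x * lap f x := by
  simp only [lap, pd_pd_mul hf hg, grad, dotProduct, Finset.mul_sum, ← Finset.sum_add_distrib]
  exact Finset.sum_congr rfl fun j _ => by ring

lemma lame_mul {h : E3 → ℝ} (hu : ContDiffAt ℝ 2 u x) (hh : ContDiffAt ℝ 2 h x) (i : Fin 3) :
    lame α (fun z k => u z k * h z) x i =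
      h x * lame α u x i - lameCommutator α (u x) (grad h x) (jac u x) (jac (grad h) x) i := by
  have hcomp := contDiffAt_pi.1 hu
  have huh : ContDiffAt ℝ 2 (fun z k => u z k * h z) x :=
    contDiffAt_pi.2 fun k => (hcomp k).mul hh
  have hdivg : pd i (divg fun z k => u z k * h z) x = h x * pd i (divg u) x +
      (grad h x i * (jac u x).trace + ∑ k, jac u x k i * grad h x k +
        ∑ k, jac (grad h) x k i * u x k) := by
    rw [pd_divg huh, pd_divg hu, Finset.mul_sum, trace, Finset.mul_sum]
    simp only [← Finset.sum_add_distrib]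
    refine Finset.sum_congr rfl fun k _ => ?_
    rw [pd_pd_mul (hcomp k) hh]
    simp only [jac_apply, grad, diag_apply]
    ring
  rw [lameCommutator_apply, lame, lame, lap_mul (hcomp i) hh, hdivg]
  change -(u x i * (jac (grad h) x).trace + 2 * (jac u x i ⬝ᵥ grad h x) + _) - _ = _
  ring

end LameOperator

section SquareIntegrable

variable {X : Type*} [MeasurableSpace X] {μ : Measure X}

lemma abs_integral_mul_le {f g : X → ℝ} (hf : MemLp f 2 μ) (hg : MemLp g 2 μ) :
    |∫ x, f x * g x ∂μ| ≤ √(∫ x, f x ^ 2 ∂μ) * √(∫ x, g x ^ 2 ∂μ) := by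
  have hHolder := integral_mul_norm_le_Lp_mul_Lq (f := f) (g := g) (μ := μ)
    Real.HolderConjugate.two_two (by simpa using hf) (by simpa using hg)
  simp only [Real.rpow_two, Real.norm_eq_abs, sq_abs, ← Real.sqrt_eq_rpow] at hHolder
  calc |∫ x, f x * g x ∂μ| ≤ ∫ x, |f x * g x| ∂μ := abs_integral_le_integral_abs
    _ = ∫ x, |f x| * |g x| ∂μ := by simp only [abs_mul]
    _ ≤ _ := hHolder

lemma tendsto_integral_mul {f g : X → ℝ} {gn : ℕ → X → ℝ} (hf : MemLp f 2 μ) (hg : MemLp g 2 μ)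
    (hgn : ∀ n, MemLp (gn n) 2 μ)
    (hlim : Tendsto (fun n => ∫ x, (g x - gn n x) ^ 2 ∂μ) atTop (nhds 0)) :
    Tendsto (fun n => ∫ x, f x * gn n x ∂μ) atTop (nhds (∫ x, f x * g x ∂μ)) := by
  rw [tendsto_iff_norm_sub_tendsto_zero]
  have hbound : Tendsto (fun n => √(∫ x, f x ^ 2 ∂μ) * √(∫ x, (g x - gn n x) ^ 2 ∂μ)) atTop
      (nhds 0) := by
    simpa only [Real.sqrt_zero, mul_zero] using hlim.sqrt.const_mul (√(∫ x, f x ^ 2 ∂μ))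
  refine squeeze_zero (fun _ => norm_nonneg _) (fun n => ?_) hbound
  have hsub : ∫ x, f x * g x ∂μ - ∫ x, f x * gn n x ∂μ = ∫ x, f x * (g x - gn n x) ∂μ := by
    simp only [mul_sub]
    exact (integral_sub (hf.integrable_mul hg) (hf.integrable_mul (hgn n))).symm
  rw [norm_sub_rev, hsub]
  exact abs_integral_mul_le hf (hg.sub (hgn n))

lemma integral_sum_sum {ι κ : Type*} [Fintype ι] [Fintype κ] {F : ι → κ → X → ℝ}
    (hF : ∀ i j, Integrable (F i j) μ) :
    ∫ x, ∑ i, ∑ j, F i j x ∂μ = ∑ i, ∑ j, ∫ x, F i j x ∂μ := by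
  rw [integral_finsetSum _ fun i _ => integrable_finsetSum _ fun j _ => hF i j]
  exact Finset.sum_congr rfl fun i _ => integral_finsetSum _ fun j _ => hF i j

lemma setIntegral_le_of_abs_le {f g : X → ℝ} {A B : Set X} (hA : MeasurableSet A)
    (hB : MeasurableSet B) (hAB : A ⊆ B) (hg : IntegrableOn g A μ) (hf : ∀ x ∈ B \ A, f x = 0)
    (hfg : ∀ x ∈ A, |f x| ≤ g x) : ∫ x in B, f x ∂μ ≤ ∫ x in A, g x ∂μ := by
  rw [setIntegral_eq_of_subset_of_forall_sdiff_eq_zero hB hAB hf]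
  exact (le_norm_self _).trans
    (norm_integral_le_of_norm_le hg (ae_restrict_of_forall_mem hA hfg))

end SquareIntegrable

section IntegrationByParts

variable {E : Type*} [NormedAddCommGroup E] [NormedSpace ℝ E] {Ω : Set E} {f g : E → ℝ}

lemma contDiff_mul_of_tsupport_subset {n : WithTop ℕ∞} (hΩ : IsOpen Ω) (hf : ContDiffOn ℝ n f Ω)
    (hg : ContDiff ℝ n g) (hgΩ : tsupport g ⊆ Ω) : ContDiff ℝ n (fun x => f x * g x) :=
  contMDiff_iff_contDiff.1 <| contMDiff_of_tsupport fun _ hx =>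
    ((hf.contDiffAt (hΩ.mem_nhds (hgΩ (tsupport_mul_subset_right hx)))).mul
      hg.contDiffAt).contMDiffAt

variable [MeasurableSpace E] [BorelSpace E] {μ : Measure E}

lemma integrable_mul_of_tsupport_subset [IsFiniteMeasureOnCompacts μ] (hΩ : IsOpen Ω)
    (hf : ContinuousOn f Ω) (hg : Continuous g) (hgc : HasCompactSupport g) (hgΩ : tsupport g ⊆ Ω) :
    Integrable (fun x => f x * g x) μ :=
  (contDiff_mul_of_tsupport_subset hΩ (contDiffOn_zero.2 hf)
    (contDiff_zero.2 hg) hgΩ).continuous.integrable_of_hasCompactSupport hgc.mul_left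

variable [FiniteDimensional ℝ E]

lemma integral_fderiv_apply_eq_zero [μ.IsAddHaarMeasure] (hf : ContDiff ℝ 1 f)
    (hfc : HasCompactSupport f) (v : E) : ∫ x, fderiv ℝ f x v ∂μ = 0 := by
  have hint : Integrable (fun x => fderiv ℝ f x v) μ :=
    ((hf.continuous_fderiv one_ne_zero).clm_apply continuous_const).integrable_of_hasCompactSupport
      (hfc.fderiv_apply ℝ v)
  simpa using integral_mul_fderiv_eq_neg_fderiv_mul_of_integrable (μ := μ)
    (f := fun _ : E => (1 : ℝ)) (g := f) (v := v) (by simp) (by simpa using hint)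
    (by simpa using hf.continuous.integrable_of_hasCompactSupport hfc)
    (by fun_prop) (fun x _ => hf.differentiable one_ne_zero x)

lemma setIntegral_mul_fderiv_eq_neg [μ.IsAddHaarMeasure] (hΩ : IsOpen Ω)
    (hf : ContDiffOn ℝ 1 f Ω) (hg : ContDiff ℝ 1 g) (hgc : HasCompactSupport g)
    (hgΩ : tsupport g ⊆ Ω) (v : E) :
    ∫ x in Ω, f x * fderiv ℝ g x v ∂μ = -∫ x in Ω, fderiv ℝ f x v * g x ∂μ := by
  have hfg := contDiff_mul_of_tsupport_subset hΩ hf hg hgΩ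
  have hfderiv : ∀ x ∈ Ω, fderiv ℝ (fun x => f x * g x) x v =
      f x * fderiv ℝ g x v + fderiv ℝ f x v * g x := fun x hx => by
    rw [fderiv_fun_mul ((hf.contDiffAt (hΩ.mem_nhds hx)).differentiableAt one_ne_zero)
      (hg.differentiable one_ne_zero x)]
    simp only [add_apply, smul_apply, smul_eq_mul, mul_comm (g x)]
  have hint₁ : Integrable (fun x => f x * fderiv ℝ g x v) μ :=
    integrable_mul_of_tsupport_subset hΩ hf.continuousOn
      ((hg.continuous_fderiv one_ne_zero).clm_apply continuous_const) (hgc.fderiv_apply ℝ v)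
      ((tsupport_fderiv_apply_subset ℝ v).trans hgΩ)
  have hint₂ : Integrable (fun x => fderiv ℝ f x v * g x) μ :=
    integrable_mul_of_tsupport_subset hΩ
      ((hf.continuousOn_fderiv_of_isOpen hΩ le_rfl).clm_apply continuousOn_const) hg.continuous
      hgc hgΩ
  have hzero : ∫ x in Ω, fderiv ℝ (fun x => f x * g x) x v ∂μ = 0 := by
    rw [setIntegral_eq_integral_of_forall_compl_eq_zero fun x hx => ?_]
    · exact integral_fderiv_apply_eq_zero hfg hgc.mul_left v
    · rw [fderiv_of_notMem_tsupport ℝ fun h => hx (hgΩ (tsupport_mul_subset_right h)), zero_apply]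
  rw [setIntegral_congr_fun hΩ.measurableSet hfderiv,
    integral_add hint₁.integrableOn hint₂.integrableOn] at hzero
  exact eq_neg_of_add_eq_zero_left hzero

end IntegrationByParts

namespace IsTestOn

variable {Ω : Set E3} {w : E3 → Fin 3 → ℝ}

lemma contDiff_apply (hw : IsTestOn Ω w) (i : Fin 3) : ContDiff ℝ ∞ fun z => w z i :=
  contDiff_pi.1 hw.1 i

lemma hasCompactSupport_apply (hw : IsTestOn Ω w) (i : Fin 3) :
    HasCompactSupport fun z => w z i :=
  hw.2.1.comp_left (g := fun v : Fin 3 → ℝ => v i) rfl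

lemma tsupport_apply_subset (hw : IsTestOn Ω w) (i : Fin 3) : tsupport (fun z => w z i) ⊆ Ω :=
  (tsupport_comp_subset (g := fun v : Fin 3 → ℝ => v i) rfl w).trans hw.2.2

lemma mul {χ : E3 → ℝ} (hw : IsTestOn Ω w) (hχ : ContDiff ℝ ∞ χ) :
    IsTestOn Ω fun z k => w z k * χ z := by
  have hsupp : Function.support (fun z k => w z k * χ z) ⊆ Function.support w :=
    Function.support_subset_iff'.2 fun x hx => by
      funext k
      simp only [Function.notMem_support.1 hx, Pi.zero_apply, zero_mul]
  exact ⟨contDiff_pi.2 fun k => (hw.contDiff_apply k).mul hχ, hw.2.1.mono hsupp,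
    (closure_mono hsupp).trans hw.2.2⟩

end IsTestOn

section GreenFormula

variable {Ω : Set E3} {u w : E3 → Fin 3 → ℝ} {α : ℝ}

lemma contDiffAt_stress {x : E3} (hu : ContDiffAt ℝ 2 u x) (s : ℝ) (i j : Fin 3) :
    ContDiffAt ℝ 1 (fun z => stress α s (jac u z) i j) x := by
  have hpd : ∀ k l, ContDiffAt ℝ 1 (pd l fun z => u z k) x := fun k l =>
    contDiffAt_pd (contDiffAt_pi.1 hu k) one_add_one_eq_two.le l
  exact ((hpd i j).add (contDiffAt_const.mul (hpd j i))).add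
    ((contDiffAt_const.mul (ContDiffAt.sum fun k _ => hpd k k)).mul contDiffAt_const)

lemma setIntegral_lameForm_eq (hΩ : IsOpen Ω) (hu : ContDiffOn ℝ 2 u Ω) (hw : IsTestOn Ω w)
    (s : ℝ) :
    ∫ x in Ω, lameForm α s (jac u x) (jac w x) = ∫ x in Ω, ∑ i, lame α u x i * w x i := by
  have huAt : ∀ x ∈ Ω, ContDiffAt ℝ 2 u x := fun x hx => hu.contDiffAt (hΩ.mem_nhds hx)
  have hσ : ∀ i j, ContDiffOn ℝ 1 (fun z => stress α s (jac u z) i j) Ω := fun i j x hx =>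
    (contDiffAt_stress (huAt x hx) s i j).contDiffWithinAt
  have hσdw : ∀ i j, IntegrableOn
      (fun x => stress α s (jac u x) i j * pd j (fun z => w z i) x) Ω := fun i j =>
    (integrable_mul_of_tsupport_subset hΩ (hσ i j).continuousOn
      (contDiff_pd (hw.contDiff_apply i) j).continuous
      (hasCompactSupport_pd (hw.hasCompactSupport_apply i) j)
      ((tsupport_fderiv_apply_subset ℝ _).trans (hw.tsupport_apply_subset i))).integrableOn
  have hdσw : ∀ i j, IntegrableOn
      (fun x => -(pd j (fun z => stress α s (jac u z) i j) x * w x i)) Ω := fun i j =>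
    (integrable_mul_of_tsupport_subset hΩ
      (((hσ i j).continuousOn_fderiv_of_isOpen hΩ le_rfl).clm_apply continuousOn_const)
      (hw.contDiff_apply i).continuous (hw.hasCompactSupport_apply i)
      (hw.tsupport_apply_subset i)).neg.integrableOn
  calc ∫ x in Ω, lameForm α s (jac u x) (jac w x)
      = ∑ i, ∑ j, ∫ x in Ω, stress α s (jac u x) i j * pd j (fun z => w z i) x :=
        integral_sum_sum hσdw
    _ = ∑ i, ∑ j, ∫ x in Ω, -(pd j (fun z => stress α s (jac u z) i j) x * w x i) :=
        Finset.sum_congr rfl fun i _ => Finset.sum_congr rfl fun j _ => by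
          rw [integral_neg]
          exact setIntegral_mul_fderiv_eq_neg hΩ (hσ i j) ((hw.contDiff_apply i).of_le (by simp))
            (hw.hasCompactSupport_apply i) (hw.tsupport_apply_subset i) _
    _ = ∫ x in Ω, ∑ i, ∑ j, -(pd j (fun z => stress α s (jac u z) i j) x * w x i) :=
        (integral_sum_sum hdσw).symm
    _ = ∫ x in Ω, ∑ i, lame α u x i * w x i :=
        setIntegral_congr_fun hΩ.measurableSet fun x hx => Finset.sum_congr rfl fun i _ => by
          simp only [lame_eq_neg_div_stress (huAt x hx) s, Finset.sum_neg_distrib, neg_mul,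
            Finset.sum_mul]

end GreenFormula

/-- `v ∈ H¹(Ω)`, in the classical sense: `v` is differentiable on `Ω`, and `v` and its partial
derivatives are square integrable there. -/
structure IsH1On (Ω : Set E3) (v : E3 → Fin 3 → ℝ) : Prop where
  differentiableAt : ∀ x ∈ Ω, DifferentiableAt ℝ v x
  memLp : ∀ i, MemLp (fun x => v x i) 2 (volume.restrict Ω)
  memLp_pd : ∀ i j, MemLp (pd j fun z => v z i) 2 (volume.restrict Ω)

section SquareIntegrableFields

variable {X : Type*} [MeasurableSpace X] {μ : Measure X} {m n : Type*} [Fintype m] [Fintype n]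

lemma integrable_sqNorm {v : X → n → ℝ} (hv : ∀ i, MemLp (fun x => v x i) 2 μ) :
    Integrable (fun x => sqNorm (v x)) μ :=
  integrable_finsetSum _ fun i _ => (hv i).integrable_sq

lemma integrable_frobSq {A : X → Matrix m n ℝ} (hA : ∀ i j, MemLp (fun x => A x i j) 2 μ) :
    Integrable (fun x => frobSq (A x)) μ :=
  integrable_finsetSum _ fun i _ => integrable_sqNorm (hA i)

lemma memLp_mul_of_hasCompactSupport [TopologicalSpace X] [BorelSpace X] {f χ : X → ℝ}
    {p : ENNReal} (hf : MemLp f p μ) (hχ : Continuous χ) (hχc : HasCompactSupport χ) :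
    MemLp (fun x => f x * χ x) p μ :=
  (hχ.memLp_top_of_hasCompactSupport hχc μ).mul hf

lemma integrable_mul_of_hasCompactSupport [TopologicalSpace X] [BorelSpace X] {f χ : X → ℝ}
    (hf : Integrable f μ) (hχ : Continuous χ) (hχc : HasCompactSupport χ) :
    Integrable (fun x => f x * χ x) μ :=
  memLp_one_iff_integrable.1
    (memLp_mul_of_hasCompactSupport (memLp_one_iff_integrable.2 hf) hχ hχc)

end SquareIntegrableFields

section H1Fields

variable {Ω : Set E3} {u v : E3 → Fin 3 → ℝ} {α s : ℝ}

lemma aestronglyMeasurable_pd (f : E3 → ℝ) (i : Fin 3) (μ : Measure E3) :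
    AEStronglyMeasurable (pd i f) μ :=
  (measurable_fderiv_apply_const ℝ f _).aestronglyMeasurable

lemma MemH10.isH1On (hΩ : IsOpen Ω) (hu : MemH10 Ω u) : IsH1On Ω u where
  differentiableAt x hx := (hu.1.contDiffAt (hΩ.mem_nhds hx)).differentiableAt (by simp)
  memLp i := by
    have hmeas := ((contDiffOn_pi.1 hu.1 i).continuousOn.aestronglyMeasurable (μ := volume)
      hΩ.measurableSet)
    refine (memLp_two_iff_integrable_sq hmeas).2 (hu.2.1.mono' (hmeas.pow 2) (ae_of_all _ ?_))
    intro x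
    rw [Real.norm_of_nonneg (sq_nonneg _)]
    exact (sq_apply_le_sqNorm (u x) i).trans (le_add_of_nonneg_right (frobSq_nonneg (jac u x)))
  memLp_pd i j := by
    have hmeas := aestronglyMeasurable_pd (fun z => u z i) j (volume.restrict Ω)
    refine (memLp_two_iff_integrable_sq hmeas).2 (hu.2.1.mono' (hmeas.pow 2) (ae_of_all _ ?_))
    intro x
    rw [Real.norm_of_nonneg (sq_nonneg _)]
    exact ((sq_apply_le_sqNorm (jac u x i) j).trans (sqNorm_apply_le_frobSq (jac u x) i)).trans
      (le_add_of_nonneg_left (sqNorm_nonneg (u x)))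

lemma IsTestOn.isH1On {U : Set E3} (hv : IsTestOn U v) : IsH1On Ω v where
  differentiableAt x _ := hv.1.differentiable (by simp) x
  memLp i := (hv.contDiff_apply i).continuous.memLp_of_hasCompactSupport
    (hv.hasCompactSupport_apply i)
  memLp_pd i j := (contDiff_pd (hv.contDiff_apply i) j).continuous.memLp_of_hasCompactSupport
    (hasCompactSupport_pd (hv.hasCompactSupport_apply i) j)

namespace IsH1On

lemma integrableOn_sqNorm (hu : IsH1On Ω u) : IntegrableOn (fun x => sqNorm (u x)) Ω :=
  integrable_sqNorm hu.memLp

lemma integrableOn_frobSq_jac (hu : IsH1On Ω u) : IntegrableOn (fun x => frobSq (jac u x)) Ω :=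
  integrable_frobSq hu.memLp_pd

lemma memLp_stress (hu : IsH1On Ω u) (i j : Fin 3) :
    MemLp (fun x => stress α s (jac u x) i j) 2 (volume.restrict Ω) :=
  ((hu.memLp_pd i j).add ((hu.memLp_pd j i).const_mul s)).add
    (((memLp_finsetSum _ fun k _ => hu.memLp_pd k k).const_mul (α - s)).mul_const
      ((1 : Matrix (Fin 3) (Fin 3) ℝ) i j))

lemma sub (hΩ : IsOpen Ω) (hu : IsH1On Ω u) (hv : IsH1On Ω v) :
    IsH1On Ω fun z k => u z k - v z k where
  differentiableAt x hx := (hu.differentiableAt x hx).sub (hv.differentiableAt x hx)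
  memLp i := (hu.memLp i).sub (hv.memLp i)
  memLp_pd i j := ((hu.memLp_pd i j).sub (hv.memLp_pd i j)).ae_eq <|
    ae_restrict_of_forall_mem hΩ.measurableSet fun x hx =>
      (pd_sub (differentiableAt_pi.1 (hu.differentiableAt x hx) i)
        (differentiableAt_pi.1 (hv.differentiableAt x hx) i) j).symm

variable {χ : E3 → ℝ}

lemma integrableOn_stress_mul_mul {f : E3 → ℝ} (hu : IsH1On Ω u)
    (hf : MemLp f 2 (volume.restrict Ω)) (hχ : Continuous χ) (hχc : HasCompactSupport χ)
    (i j : Fin 3) : IntegrableOn (fun x => stress α s (jac u x) i j * χ x * f x) Ω :=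
  (memLp_mul_of_hasCompactSupport (hu.memLp_stress i j) hχ hχc).integrable_mul hf

lemma integrableOn_stress_mul_pd_add (hu : IsH1On Ω u) (hv : IsH1On Ω v) (hχ : ContDiff ℝ ∞ χ)
    (hχc : HasCompactSupport χ) (i j : Fin 3) :
    IntegrableOn (fun x => stress α s (jac u x) i j * χ x * pd j (fun z => v z i) x +
      stress α s (jac u x) i j * pd j χ x * v x i) Ω :=
  (hu.integrableOn_stress_mul_mul (hv.memLp_pd i j) hχ.continuous hχc i j).add
    (hu.integrableOn_stress_mul_mul (hv.memLp i) (contDiff_pd hχ j).continuous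
      (hasCompactSupport_pd hχc j) i j)

lemma lameForm_jac_mul_eq (hv : IsH1On Ω v) (hχ : ContDiff ℝ ∞ χ) (A : Matrix (Fin 3) (Fin 3) ℝ)
    {x : E3} (hx : x ∈ Ω) :
    lameForm α s A (jac (fun z k => v z k * χ z) x) =
      ∑ i, ∑ j, (stress α s A i j * χ x * pd j (fun z => v z i) x +
        stress α s A i j * pd j χ x * v x i) := by
  rw [jac_mul (hv.differentiableAt x hx) (hχ.differentiable (by simp) x)]
  refine Finset.sum_congr rfl fun i _ => Finset.sum_congr rfl fun j _ => ?_
  change _ * (χ x * pd j (fun z => v z i) x + v x i * pd j χ x) = _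
  ring

lemma integrableOn_lameForm_mul (hΩ : IsOpen Ω) (hu : IsH1On Ω u) (hv : IsH1On Ω v)
    (hχ : ContDiff ℝ ∞ χ) (hχc : HasCompactSupport χ) :
    IntegrableOn (fun x => lameForm α s (jac u x) (jac (fun z k => v z k * χ z) x)) Ω :=
  (integrableOn_congr_fun (fun x hx => hv.lameForm_jac_mul_eq hχ (jac u x) hx)
    hΩ.measurableSet).2 <| integrable_finsetSum _ fun i _ => integrable_finsetSum _ fun j _ =>
      hu.integrableOn_stress_mul_pd_add hv hχ hχc i j

lemma setIntegral_lameForm_mul (hΩ : IsOpen Ω) (hu : IsH1On Ω u) (hv : IsH1On Ω v)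
    (hχ : ContDiff ℝ ∞ χ) (hχc : HasCompactSupport χ) :
    ∫ x in Ω, lameForm α s (jac u x) (jac (fun z k => v z k * χ z) x) =
      ∑ i, ∑ j, ((∫ x in Ω, stress α s (jac u x) i j * χ x * pd j (fun z => v z i) x) +
        ∫ x in Ω, stress α s (jac u x) i j * pd j χ x * v x i) := by
  rw [setIntegral_congr_fun hΩ.measurableSet fun x hx => hv.lameForm_jac_mul_eq hχ (jac u x) hx,
    integral_sum_sum fun i j => hu.integrableOn_stress_mul_pd_add hv hχ hχc i j]
  exact Finset.sum_congr rfl fun i _ => Finset.sum_congr rfl fun j _ => integral_add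
    (hu.integrableOn_stress_mul_mul (hv.memLp_pd i j) hχ.continuous hχc i j)
    (hu.integrableOn_stress_mul_mul (hv.memLp i) (contDiff_pd hχ j).continuous
      (hasCompactSupport_pd hχc j) i j)

end IsH1On

namespace MemH10

lemma exists_tendsto (hΩ : IsOpen Ω) (hu : MemH10 Ω u) :
    ∃ un : ℕ → E3 → Fin 3 → ℝ, (∀ n, IsTestOn Ω (un n)) ∧
      (∀ i, Tendsto (fun n => ∫ x in Ω, (u x i - un n x i) ^ 2) atTop (nhds 0)) ∧
      ∀ i j, Tendsto (fun n => ∫ x in Ω, (pd j (fun z => u z i) x - pd j (fun z => un n z i) x) ^ 2)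
        atTop (nhds 0) := by
  obtain ⟨un, htest, hlim⟩ := hu.2.2
  have hdiff : ∀ n, IsH1On Ω fun z k => u z k - un n z k := fun n =>
    (hu.isH1On hΩ).sub hΩ (htest n).isH1On
  have henergy := fun n => (hdiff n).integrableOn_sqNorm.add (hdiff n).integrableOn_frobSq_jac
  refine ⟨un, htest, fun i => ?_, fun i j => ?_⟩
  · refine squeeze_zero (fun n => integral_nonneg fun x => sq_nonneg _) (fun n => ?_) hlim
    refine integral_mono ((hdiff n).memLp i).integrable_sq (henergy n) fun x => ?_
    exact (sq_apply_le_sqNorm (fun k => u x k - un n x k) i).trans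
      (le_add_of_nonneg_right (frobSq_nonneg (jac (fun z k => u z k - un n z k) x)))
  · refine squeeze_zero (fun n => integral_nonneg fun x => sq_nonneg _) (fun n => ?_) hlim
    have hpd : ∀ x ∈ Ω, (pd j (fun z => u z i) x - pd j (fun z => un n z i) x) ^ 2 =
        jac (fun z k => u z k - un n z k) x i j ^ 2 := fun x hx => by
      rw [jac_apply, pd_sub (differentiableAt_pi.1 ((hu.isH1On hΩ).differentiableAt x hx) i)
        (differentiableAt_pi.1 ((htest n).isH1On.differentiableAt x hx) i)]
    rw [setIntegral_congr_fun hΩ.measurableSet hpd]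
    refine integral_mono ((hdiff n).memLp_pd i j).integrable_sq (henergy n) fun x => ?_
    exact ((sq_apply_le_sqNorm _ j).trans (sqNorm_apply_le_frobSq _ i)).trans
      (le_add_of_nonneg_left (sqNorm_nonneg fun k => u x k - un n x k))

lemma setIntegral_lameForm_mul_eq_zero {χ : E3 → ℝ} (hΩ : IsOpen Ω) (hu : MemH10 Ω u)
    (hχ : ContDiff ℝ ∞ χ) (hχc : HasCompactSupport χ)
    (hLu : ∀ x ∈ Ω, χ x ≠ 0 → ∀ i, lame α u x i = 0) :
    ∫ x in Ω, lameForm α s (jac u x) (jac (fun z k => u z k * χ z) x) = 0 := by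
  obtain ⟨un, htest, hlim, hlim_pd⟩ := hu.exists_tendsto hΩ
  have hu1 := hu.isH1On hΩ
  have hzero : ∀ n, ∫ x in Ω, lameForm α s (jac u x) (jac (fun z k => un n z k * χ z) x) = 0 := by
    intro n
    rw [setIntegral_lameForm_eq hΩ (hu.1.of_le (WithTop.coe_le_coe.2 le_top)) ((htest n).mul hχ)]
    refine setIntegral_eq_zero_of_forall_eq_zero fun x hx => Finset.sum_eq_zero fun i _ => ?_
    by_cases hχx : χ x = 0
    · simp only [hχx, mul_zero]
    · rw [hLu x hx hχx, zero_mul]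
  have htendsto : Tendsto
      (fun n => ∫ x in Ω, lameForm α s (jac u x) (jac (fun z k => un n z k * χ z) x)) atTop
      (nhds (∫ x in Ω, lameForm α s (jac u x) (jac (fun z k => u z k * χ z) x))) := by
    rw [hu1.setIntegral_lameForm_mul hΩ hu1 hχ hχc]
    refine Tendsto.congr
      (fun n => (hu1.setIntegral_lameForm_mul hΩ (htest n).isH1On hχ hχc).symm) ?_
    refine tendsto_finsetSum _ fun i _ => tendsto_finsetSum _ fun j _ => .add ?_ ?_
    · exact tendsto_integral_mul
        (memLp_mul_of_hasCompactSupport (hu1.memLp_stress i j) hχ.continuous hχc)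
        (hu1.memLp_pd i j) (fun n => (htest n).isH1On.memLp_pd i j) (hlim_pd i j)
    · exact tendsto_integral_mul
        (memLp_mul_of_hasCompactSupport (hu1.memLp_stress i j) (contDiff_pd hχ j).continuous
          (hasCompactSupport_pd hχc j))
        (hu1.memLp i) (fun n => (htest n).isH1On.memLp i) (hlim i)
  simp only [hzero] at htendsto
  exact tendsto_nhds_unique htendsto tendsto_const_nhds

end MemH10

end H1Fields

section GradientBounds

variable {f : E3 → ℝ}

lemma grad_sq {x : E3} (hf : DifferentiableAt ℝ f x) :
    grad (fun z => f z ^ 2) x = (2 * f x) • grad f x := by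
  funext j
  simp only [sq, grad, pd_mul hf hf, Pi.smul_apply, smul_eq_mul]
  ring

lemma grad_comp_smul (f : E3 → ℝ) (a : ℝ) (x : E3) :
    grad (fun z => f (a • z)) x = a • grad f (a • x) :=
  funext fun i => pd_comp_smul f a i x

lemma jac_grad_comp_smul (f : E3 → ℝ) (a : ℝ) (x : E3) :
    jac (grad fun z => f (a • z)) x = a ^ 2 • jac (grad f) (a • x) := by
  ext i j
  have hpd : (fun z => grad (fun y => f (a • y)) z i) = fun z => a * pd i f (a • z) :=
    funext fun z => pd_comp_smul f a i z
  rw [jac_apply, hpd, pd_const_mul, pd_comp_smul, ← mul_assoc, ← sq]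
  rfl

lemma contDiff_sqNorm_grad (hf : ContDiff ℝ ∞ f) : ContDiff ℝ ∞ fun x => sqNorm (grad f x) :=
  ContDiff.sum fun j _ => (contDiff_pd hf j).pow 2

lemma hasCompactSupport_sqNorm_grad (hf : HasCompactSupport f) :
    HasCompactSupport fun x => sqNorm (grad f x) :=
  (hf.fderiv ℝ).comp_left (g := fun T : E3 →L[ℝ] ℝ => sqNorm fun j => T (EuclideanSpace.single j 1))
    (by simp [sqNorm])

lemma exists_sqNorm_grad_le (hf : ContDiff ℝ ∞ f) (hfc : HasCompactSupport f) :
    ∃ M, ∀ x, sqNorm (grad f x) ≤ M := by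
  obtain ⟨M, hM⟩ := (hasCompactSupport_sqNorm_grad hfc).exists_bound_of_continuous
    (contDiff_sqNorm_grad hf).continuous
  exact ⟨M, fun x => (le_abs_self _).trans (hM x)⟩

lemma exists_frobSq_hessian_le (hf : ContDiff ℝ ∞ f) (hfc : HasCompactSupport f) :
    ∃ M, ∀ x, frobSq (jac (grad f) x) ≤ M := by
  choose M hM using fun i =>
    exists_sqNorm_grad_le (contDiff_pd hf i) (hasCompactSupport_pd hfc i)
  exact ⟨∑ i, M i, fun x => Finset.sum_le_sum fun i _ => hM i x⟩

end GradientBounds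

section Caccioppoli

open scoped Pointwise

variable {Ω K S : Set E3} {u : E3 → Fin 3 → ℝ} {ζ : E3 → ℝ} {α ε M : ℝ}

lemma MemH10.caccioppoli (hΩ : IsOpen Ω) (hu : MemH10 Ω u) (hζ : ContDiff ℝ ∞ ζ)
    (hζc : HasCompactSupport ζ) (hLu : ∀ x ∈ Ω, ζ x ≠ 0 → ∀ i, lame α u x i = 0)
    (hε₀ : 0 ≤ ε) (hε : ε ≤ 1) (hεα : ε ≤ 1 + α) :
    ε / 2 * ∫ x in Ω, frobSq (jac u x) * ζ x ^ 2 ≤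
      (2 + |α|) * ∫ x in Ω, sqNorm (u x) * sqNorm (grad ζ x) := by
  have hu1 := hu.isH1On hΩ
  have hζ2 : ContDiff ℝ ∞ fun z => ζ z ^ 2 := hζ.pow 2
  have hζ2c : HasCompactSupport fun z => ζ z ^ 2 :=
    hζc.comp_left (g := fun t : ℝ => t ^ 2) (zero_pow two_ne_zero)
  have hpointwise : ∀ x ∈ Ω, ε / 2 * (frobSq (jac u x) * ζ x ^ 2) ≤
      lameForm α (ε - 1) (jac u x) (jac (fun z k => u z k * ζ z ^ 2) x) +
        (2 + |α|) * (sqNorm (u x) * sqNorm (grad ζ x)) := fun x hx => by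
    rw [jac_mul (hu1.differentiableAt x hx) (hζ2.differentiable (by simp) x),
      grad_sq (hζ.differentiable (by simp) x), Matrix.vecMulVec_smul, mul_comm (frobSq _)]
    exact le_lameForm_cutoff hε₀ hε hεα _ _ _ _
  have hform := hu1.integrableOn_lameForm_mul (α := α) (s := ε - 1) hΩ hu1 hζ2 hζ2c
  have hleft : IntegrableOn (fun x => frobSq (jac u x) * ζ x ^ 2) Ω :=
    integrable_mul_of_hasCompactSupport hu1.integrableOn_frobSq_jac hζ2.continuous hζ2c
  have hright : IntegrableOn (fun x => sqNorm (u x) * sqNorm (grad ζ x)) Ω :=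
    integrable_mul_of_hasCompactSupport hu1.integrableOn_sqNorm
      (contDiff_sqNorm_grad hζ).continuous (hasCompactSupport_sqNorm_grad hζc)
  calc ε / 2 * ∫ x in Ω, frobSq (jac u x) * ζ x ^ 2
      = ∫ x in Ω, ε / 2 * (frobSq (jac u x) * ζ x ^ 2) := (integral_const_mul _ _).symm
    _ ≤ ∫ x in Ω, (lameForm α (ε - 1) (jac u x) (jac (fun z k => u z k * ζ z ^ 2) x) +
          (2 + |α|) * (sqNorm (u x) * sqNorm (grad ζ x))) :=
        setIntegral_mono_on (hleft.const_mul _) (hform.add (hright.const_mul _))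
          hΩ.measurableSet hpointwise
    _ = (2 + |α|) * ∫ x in Ω, sqNorm (u x) * sqNorm (grad ζ x) := by
        rw [integral_add hform (hright.const_mul _), integral_const_mul,
          hu.setIntegral_lameForm_mul_eq_zero hΩ hζ2 hζ2c
            fun x hx hζx => hLu x hx ((pow_ne_zero_iff two_ne_zero).1 hζx), zero_add]

lemma MemH10.caccioppoli_inter (hΩ : IsOpen Ω) (hK : MeasurableSet K) (hS : MeasurableSet S)
    (hu : MemH10 Ω u) (hζ : ContDiff ℝ ∞ ζ) (hζc : HasCompactSupport ζ) (hζS : tsupport ζ ⊆ S)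
    (hζK : ∀ x ∈ K, ζ x = 1) (hM : ∀ x, sqNorm (grad ζ x) ≤ M)
    (hLu : ∀ x ∈ Ω ∩ S, ∀ i, lame α u x i = 0) (hε₀ : 0 ≤ ε) (hε : ε ≤ 1) (hεα : ε ≤ 1 + α) :
    ε / 2 * ∫ x in Ω ∩ K, frobSq (jac u x) ≤ (2 + |α|) * (M * ∫ x in Ω ∩ S, sqNorm (u x)) := by
  have hu1 := hu.isH1On hΩ
  have hleft : ∫ x in Ω ∩ K, frobSq (jac u x) ≤ ∫ x in Ω, frobSq (jac u x) * ζ x ^ 2 := by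
    rw [setIntegral_congr_fun (hΩ.measurableSet.inter hK)
      fun x hx => show frobSq (jac u x) = frobSq (jac u x) * ζ x ^ 2 by
        rw [hζK x hx.2, one_pow, mul_one]]
    exact setIntegral_mono_set
      (integrable_mul_of_hasCompactSupport hu1.integrableOn_frobSq_jac (hζ.pow 2).continuous
        (hζc.comp_left (g := fun t : ℝ => t ^ 2) (zero_pow two_ne_zero)))
      (ae_of_all _ fun x => mul_nonneg (frobSq_nonneg _) (sq_nonneg _))
      Set.inter_subset_left.eventuallyLE
  have hright : ∫ x in Ω, sqNorm (u x) * sqNorm (grad ζ x) ≤ M * ∫ x in Ω ∩ S, sqNorm (u x) := by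
    have hgrad : ∀ x ∈ Ω \ (Ω ∩ S), sqNorm (u x) * sqNorm (grad ζ x) = 0 := fun x hx => by
      have hx : x ∉ tsupport ζ := fun h => hx.2 ⟨hx.1, hζS h⟩
      simp [sqNorm, grad, pd, fderiv_of_notMem_tsupport ℝ hx]
    rw [setIntegral_eq_of_subset_of_forall_sdiff_eq_zero hΩ.measurableSet Set.inter_subset_left
      hgrad, ← integral_const_mul]
    refine setIntegral_mono_on ?_ ?_ (hΩ.measurableSet.inter hS) fun x _ => ?_
    · exact integrable_mul_of_hasCompactSupport
        (hu1.integrableOn_sqNorm.mono_set Set.inter_subset_left)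
        (contDiff_sqNorm_grad hζ).continuous (hasCompactSupport_sqNorm_grad hζc)
    · exact (hu1.integrableOn_sqNorm.mono_set Set.inter_subset_left).const_mul M
    · rw [mul_comm]
      exact mul_le_mul_of_nonneg_right (hM x) (sqNorm_nonneg (u x))
  calc ε / 2 * ∫ x in Ω ∩ K, frobSq (jac u x)
      ≤ ε / 2 * ∫ x in Ω, frobSq (jac u x) * ζ x ^ 2 := by gcongr
    _ ≤ (2 + |α|) * ∫ x in Ω, sqNorm (u x) * sqNorm (grad ζ x) :=
        hu.caccioppoli hΩ hζ hζc
          (fun x hx hζx => hLu x ⟨hx, hζS (subset_tsupport ζ hζx)⟩) hε₀ hε hεα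
    _ ≤ _ := by gcongr

lemma exists_contDiff_eqOn_one {E : Type*} [NormedAddCommGroup E] [NormedSpace ℝ E]
    [FiniteDimensional ℝ E] {K S : Set E} (hK : IsClosed K) (hS : IsOpen S)
    (hSb : Bornology.IsBounded S) (hKS : K ⊆ S) :
    ∃ ζ : E → ℝ, ContDiff ℝ ∞ ζ ∧ HasCompactSupport ζ ∧ tsupport ζ ⊆ S ∧ ∀ x ∈ K, ζ x = 1 := by
  obtain ⟨ζ, hζ₀, hζ₁, -⟩ := exists_contMDiffMap_zero_one_nhds_of_isClosed (n := ⊤)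
    (modelWithCornersSelf ℝ E) hS.isClosed_compl hK (Set.disjoint_compl_left_iff_subset.2 hKS)
  have hζS : tsupport ζ ⊆ S := fun x hx => by
    by_contra hxS
    exact notMem_tsupport_iff_eventuallyEq.2 (hζ₀.filter_mono (nhds_le_nhdsSet hxS)) hx
  exact ⟨ζ, ζ.contMDiff.contDiff, isCompact_of_isClosed_isBounded (isClosed_tsupport _)
    (hSb.subset hζS), hζS, fun x hx => hζ₁.self_of_nhdsSet x hx⟩

lemma exists_caccioppoli_dilated (hα : -1 < α) (hK : IsClosed K) (hS : IsOpen S)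
    (hSb : Bornology.IsBounded S) (hKS : K ⊆ S) :
    ∃ C, 0 ≤ C ∧ ∀ Ω : Set E3, IsOpen Ω → ∀ ρ : ℝ, 0 < ρ → ∀ u, MemH10 Ω u →
      (∀ x ∈ Ω ∩ ρ • S, ∀ i, lame α u x i = 0) →
      ρ ^ 2 * ∫ x in Ω ∩ ρ • K, frobSq (jac u x) ≤ C * ∫ x in Ω ∩ ρ • S, sqNorm (u x) := by
  obtain ⟨ζ, hζ, hζc, hζS, hζK⟩ := exists_contDiff_eqOn_one hK hS hSb hKS
  obtain ⟨M, hM⟩ := exists_sqNorm_grad_le hζ hζc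
  have hM₀ : 0 ≤ M := (sqNorm_nonneg _).trans (hM 0)
  set ε := min 1 (1 + α)
  have hε : 0 < ε := lt_min one_pos (by linarith)
  refine ⟨2 / ε * ((2 + |α|) * M), by positivity, fun Ω hΩ ρ hρ u hu hLu => ?_⟩
  have hρ' : ρ⁻¹ ≠ 0 := inv_ne_zero hρ.ne'
  have htsupport : tsupport (fun x => ζ (ρ⁻¹ • x)) ⊆ ρ • S := fun x hx =>
    (Set.mem_smul_set_iff_inv_smul_mem₀ hρ.ne' _ _).2 <| hζS <|
      (tsupport_comp_eq_preimage ζ (Homeomorph.smulOfNeZero ρ⁻¹ hρ')).subset hx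
  have hscaled := hu.caccioppoli_inter (ζ := fun x => ζ (ρ⁻¹ • x)) (M := (ρ⁻¹) ^ 2 * M) hΩ
    (hK.smul_of_ne_zero hρ.ne').measurableSet (hS.smul₀ hρ.ne').measurableSet
    (hζ.comp (contDiff_const_smul _)) (hζc.comp_smul hρ') htsupport
    (fun x hx => hζK _ ((Set.mem_smul_set_iff_inv_smul_mem₀ hρ.ne' _ _).1 hx))
    (fun x => by
      rw [grad_comp_smul, sqNorm_smul]
      exact mul_le_mul_of_nonneg_left (hM _) (sq_nonneg _))
    hLu hε.le (min_le_left _ _) (min_le_right _ _)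
  calc ρ ^ 2 * ∫ x in Ω ∩ ρ • K, frobSq (jac u x)
      = ρ ^ 2 * (2 / ε) * (ε / 2 * ∫ x in Ω ∩ ρ • K, frobSq (jac u x)) := by
        field_simp
    _ ≤ ρ ^ 2 * (2 / ε) * ((2 + |α|) * ((ρ⁻¹) ^ 2 * M * ∫ x in Ω ∩ ρ • S, sqNorm (u x))) := by
        gcongr
    _ = 2 / ε * ((2 + |α|) * M) * ∫ x in Ω ∩ ρ • S, sqNorm (u x) := by
        field_simp

lemma exists_setIntegral_energy_le (hα : -1 < α) (hK : IsClosed K) (hS : IsOpen S)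
    (hSb : Bornology.IsBounded S) (hKS : K ⊆ S) :
    ∃ C, 0 ≤ C ∧ ∀ Ω : Set E3, IsOpen Ω → ∀ ρ : ℝ, 0 < ρ → ∀ u, MemH10 Ω u →
      (∀ x ∈ Ω ∩ ρ • S, ∀ i, lame α u x i = 0) →
      ∫ x in Ω ∩ ρ • K, (sqNorm (u x) + ρ ^ 2 * frobSq (jac u x)) ≤
        C * ∫ x in Ω ∩ ρ • S, sqNorm (u x) := by
  obtain ⟨C, hC, hbound⟩ := exists_caccioppoli_dilated hα hK hS hSb hKS
  refine ⟨1 + C, by positivity, fun Ω hΩ ρ hρ u hu hLu => ?_⟩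
  have hu1 := hu.isH1On hΩ
  have hmono : ∫ x in Ω ∩ ρ • K, sqNorm (u x) ≤ ∫ x in Ω ∩ ρ • S, sqNorm (u x) :=
    setIntegral_mono_set (hu1.integrableOn_sqNorm.mono_set Set.inter_subset_left)
      (ae_of_all _ fun x => sqNorm_nonneg (u x))
      (Set.inter_subset_inter_right Ω (Set.smul_set_mono hKS)).eventuallyLE
  rw [integral_add (hu1.integrableOn_sqNorm.mono_set Set.inter_subset_left)
    ((hu1.integrableOn_frobSq_jac.mono_set Set.inter_subset_left).const_mul _),
    integral_const_mul, one_add_mul]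
  exact add_le_add hmono (hbound Ω hΩ ρ hρ u hu hLu)

end Caccioppoli

section LameDensity

open Matrix
open scoped Pointwise

variable {α : ℝ} {η : E3 → ℝ} {u w : E3 → Fin 3 → ℝ} {x y : E3}

lemma frobSq_Phi_le (α : ℝ) (x : E3) :
    frobSq (Matrix.of (Phi α x)) ≤ 2 * cA α ^ 2 * (3 + (α / (α + 2)) ^ 2) * (‖x‖⁻¹) ^ 2 := by
  set β := α / (α + 2)
  have hPhi : Matrix.of (Phi α x) =
      (cA α * ‖x‖⁻¹) • (1 + (β / ‖x‖ ^ 2) • vecMulVec x.ofLp x.ofLp) := by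
    ext i j
    simp only [of_apply, Phi, Matrix.smul_apply, Matrix.add_apply, one_apply, vecMulVec_apply,
      smul_eq_mul, β]
    ring
  have hx : frobSq ((β / ‖x‖ ^ 2) • vecMulVec x.ofLp x.ofLp) ≤ β ^ 2 := by
    rw [frobSq_smul, frobSq_vecMulVec, sqNorm, ← EuclideanSpace.real_norm_sq_eq]
    rcases eq_or_ne ‖x‖ 0 with hx | hx
    · simp [hx, sq_nonneg]
    · exact le_of_eq (by field_simp)
  calc frobSq (Matrix.of (Phi α x))
      ≤ (cA α * ‖x‖⁻¹) ^ 2 * (2 * (3 + β ^ 2)) := by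
        rw [hPhi, frobSq_smul]
        gcongr
        refine (frobSq_add_le _ _).trans ?_
        rw [frobSq_one, Fintype.card_fin]
        gcongr
        norm_num
    _ = _ := by ring

/-- The energy density `Lw · (Φ(· - y) w)`, whose integral over `ℝ³` is `lameEnergy α w y`. -/
def lameDensity (α : ℝ) (w : E3 → Fin 3 → ℝ) (y x : E3) : ℝ :=
  ∑ i, ∑ j, lame α w x i * Phi α (x - y) i j * w x j

lemma lameDensity_sq_le (α : ℝ) (w : E3 → Fin 3 → ℝ) (y x : E3) :
    lameDensity α w y x ^ 2 ≤
      sqNorm (lame α w x) * (frobSq (Matrix.of (Phi α (x - y))) * sqNorm (w x)) := by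
  refine le_of_eq_of_le ?_ (dotProduct_mulVec_sq_le _ _ _)
  simp only [lameDensity, dotProduct, mulVec, of_apply, Finset.mul_sum, mul_assoc]

lemma lameDensity_eq_zero (h : (∀ i, lame α w x i = 0) ∨ w x = 0) : lameDensity α w y x = 0 := by
  rcases h with h | h <;> simp [lameDensity, h]

lemma sqNorm_lame_mul_le {h : E3 → ℝ} (hu : ContDiffAt ℝ 2 u x) (hh : ContDiffAt ℝ 2 h x)
    (hLu : ∀ i, lame α u x i = 0) :
    sqNorm (lame α (fun z k => u z k * h z) x) ≤ 160 * (1 + α ^ 2) *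
      (frobSq (jac (grad h) x) * sqNorm (u x) + frobSq (jac u x) * sqNorm (grad h x)) := by
  have hlame : lame α (fun z k => u z k * h z) x =
      (-1 : ℝ) • lameCommutator α (u x) (grad h x) (jac u x) (jac (grad h) x) := by
    funext i
    rw [lame_mul hu hh, hLu, mul_zero, zero_sub, neg_one_smul, Pi.neg_apply]
  rw [hlame, sqNorm_smul, neg_one_sq, one_mul]
  refine (sqNorm_lameCommutator_le _ _ _ _ _).trans_eq ?_
  norm_num

lemma exists_sqNorm_lame_cutoff_le (α : ℝ) (hη : ContDiff ℝ ∞ η) (hηc : HasCompactSupport η) :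
    ∃ C, 0 ≤ C ∧ ∀ ρ : ℝ, 0 < ρ → ∀ u x, ContDiffAt ℝ 2 u x → (∀ i, lame α u x i = 0) →
      sqNorm (lame α (fun z k => u z k * η (ρ⁻¹ • z)) x) ≤
        C * ((ρ⁻¹) ^ 4 * (sqNorm (u x) + ρ ^ 2 * frobSq (jac u x))) := by
  obtain ⟨M₁, hM₁⟩ := exists_sqNorm_grad_le hη hηc
  obtain ⟨M₂, hM₂⟩ := exists_frobSq_hessian_le hη hηc
  have hM₁_nonneg : 0 ≤ M₁ := (sqNorm_nonneg _).trans (hM₁ 0)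
  have hM₂_nonneg : 0 ≤ M₂ := (frobSq_nonneg _).trans (hM₂ 0)
  refine ⟨160 * (1 + α ^ 2) * (M₁ + M₂), by positivity, fun ρ hρ u x hu hLu => ?_⟩
  have hη2 : ContDiffAt ℝ 2 (fun z => η (ρ⁻¹ • z)) x :=
    ((hη.of_le (WithTop.coe_le_coe.2 le_top)).comp (contDiff_const_smul ρ⁻¹)).contDiffAt
  have hsq := sqNorm_nonneg (u x)
  have hfrob := frobSq_nonneg (jac u x)
  calc sqNorm (lame α (fun z k => u z k * η (ρ⁻¹ • z)) x)
      ≤ 160 * (1 + α ^ 2) * ((ρ⁻¹ ^ 2) ^ 2 * M₂ * sqNorm (u x) +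
          frobSq (jac u x) * ((ρ⁻¹) ^ 2 * M₁)) := by
        refine (sqNorm_lame_mul_le hu hη2 hLu).trans ?_
        rw [jac_grad_comp_smul, grad_comp_smul, frobSq_smul, sqNorm_smul]
        gcongr
        exacts [hM₂ _, hM₁ _]
    _ ≤ 160 * (1 + α ^ 2) * ((ρ⁻¹ ^ 2) ^ 2 * (M₁ + M₂) * sqNorm (u x) +
          frobSq (jac u x) * ((ρ⁻¹) ^ 2 * (M₁ + M₂))) := by
        gcongr <;> linarith
    _ = _ := by field_simp

lemma exists_abs_lameDensity_cutoff_le (α : ℝ) (hη : ContDiff ℝ ∞ η) (hηc : HasCompactSupport η)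
    {δ : ℝ} (hδ : 0 < δ) :
    ∃ C, 0 ≤ C ∧ ∀ ρ : ℝ, 0 < ρ → ∀ u x y, ContDiffAt ℝ 2 u x → (∀ i, lame α u x i = 0) →
      δ * ρ ≤ ‖x - y‖ → |lameDensity α (fun z k => u z k * η (ρ⁻¹ • z)) y x| ≤
        C * ((ρ ^ 3)⁻¹ * (sqNorm (u x) + ρ ^ 2 * frobSq (jac u x))) := by
  obtain ⟨M, hM⟩ := hηc.exists_bound_of_continuous hη.continuous
  obtain ⟨C, hC, hlame⟩ := exists_sqNorm_lame_cutoff_le α hη hηc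
  set P := 2 * cA α ^ 2 * (3 + (α / (α + 2)) ^ 2)
  refine ⟨√(C * P * M ^ 2) / δ, by positivity, fun ρ hρ u x y hu hLu hxy => ?_⟩
  set e := sqNorm (u x) + ρ ^ 2 * frobSq (jac u x)
  have hue : sqNorm (u x) ≤ e := le_add_of_nonneg_right (mul_nonneg (sq_nonneg ρ) (frobSq_nonneg _))
  have he : 0 ≤ e := (sqNorm_nonneg _).trans hue
  have hηu : sqNorm (fun k => u x k * η (ρ⁻¹ • x)) ≤ M ^ 2 * e :=
    calc sqNorm (fun k => u x k * η (ρ⁻¹ • x)) = η (ρ⁻¹ • x) ^ 2 * sqNorm (u x) := by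
          simp_rw [mul_comm (u x _)]
          exact sqNorm_smul _ _
      _ ≤ M ^ 2 * e := mul_le_mul (sq_le_sq.2 ((hM _).trans (le_abs_self M))) hue
          (sqNorm_nonneg _) (sq_nonneg M)
  have hPhi : frobSq (Matrix.of (Phi α (x - y))) ≤ P * ((δ * ρ)⁻¹) ^ 2 :=
    (frobSq_Phi_le α (x - y)).trans (by gcongr)
  refine abs_le_of_sq_le_sq ?_ (by positivity)
  calc lameDensity α (fun z k => u z k * η (ρ⁻¹ • z)) y x ^ 2
      ≤ C * ((ρ⁻¹) ^ 4 * e) * (P * ((δ * ρ)⁻¹) ^ 2 * (M ^ 2 * e)) :=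
        (lameDensity_sq_le _ _ _ _).trans <|
          mul_le_mul (hlame ρ hρ u x hu hLu)
            (mul_le_mul hPhi hηu (sqNorm_nonneg _) (by positivity))
            (mul_nonneg (frobSq_nonneg _) (sqNorm_nonneg _)) (by positivity)
    _ = C * P * M ^ 2 * (((ρ ^ 3)⁻¹ * e) / δ) ^ 2 := by field_simp
    _ = √(C * P * M ^ 2) ^ 2 * (((ρ ^ 3)⁻¹ * e) / δ) ^ 2 := by
        rw [Real.sq_sqrt (by positivity)]
    _ = (√(C * P * M ^ 2) / δ * ((ρ ^ 3)⁻¹ * e)) ^ 2 := by ring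

lemma lameDensity_cutoff_eq_zero {ρ : ℝ}
    (hη : (η =ᶠ[nhds (ρ⁻¹ • x)] 1 ∧ ∀ i, lame α u x i = 0) ∨ η (ρ⁻¹ • x) = 0) :
    lameDensity α (fun z k => u z k * η (ρ⁻¹ • z)) y x = 0 := by
  rcases hη with ⟨hη1, hLu⟩ | hη0
  · have hη1' : ∀ᶠ z in nhds x, η (ρ⁻¹ • z) = 1 :=
      (continuous_const_smul ρ⁻¹).continuousAt.eventually hη1
    have hu : (fun z k => u z k * η (ρ⁻¹ • z)) =ᶠ[nhds x] u := by
      filter_upwards [hη1'] with z hz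
      funext k
      rw [hz, mul_one]
    exact lameDensity_eq_zero (.inl fun i => by rw [lame_congr hu, hLu])
  · refine lameDensity_eq_zero (.inr (funext fun k => ?_))
    rw [hη0, mul_zero, Pi.zero_apply]

end LameDensity

section Annuli

open scoped Pointwise

variable {E : Type*} [NormedAddCommGroup E]

lemma isOpen_annulus (a b : ℝ) : IsOpen {x : E | a < ‖x‖ ∧ ‖x‖ < b} :=
  (isOpen_lt continuous_const continuous_norm).inter (isOpen_lt continuous_norm continuous_const)

lemma isClosed_closedAnnulus (a b : ℝ) : IsClosed {x : E | a ≤ ‖x‖ ∧ ‖x‖ ≤ b} :=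
  (isClosed_le continuous_const continuous_norm).inter
    (isClosed_le continuous_norm continuous_const)

variable [NormedSpace ℝ E]

lemma smul_annulus {ρ : ℝ} (hρ : 0 < ρ) (a b : ℝ) :
    ρ • {x : E | a < ‖x‖ ∧ ‖x‖ < b} = {x | a * ρ < ‖x‖ ∧ ‖x‖ < b * ρ} := by
  ext x
  rw [Set.mem_smul_set_iff_inv_smul_mem₀ hρ.ne', Set.mem_ofPred_eq, norm_smul,
    Real.norm_of_nonneg (inv_nonneg.2 hρ.le), lt_inv_mul_iff₀' hρ, inv_mul_lt_iff₀' hρ]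
  rfl

lemma smul_closedAnnulus {ρ : ℝ} (hρ : 0 < ρ) (a b : ℝ) :
    ρ • {x : E | a ≤ ‖x‖ ∧ ‖x‖ ≤ b} = {x | a * ρ ≤ ‖x‖ ∧ ‖x‖ ≤ b * ρ} := by
  ext x
  rw [Set.mem_smul_set_iff_inv_smul_mem₀ hρ.ne', Set.mem_ofPred_eq, norm_smul,
    Real.norm_of_nonneg (inv_nonneg.2 hρ.le), le_inv_mul_iff₀' hρ, inv_mul_le_iff₀' hρ]
  rfl

end Annuli

section CutoffEnergy

open scoped Pointwise

variable {α : ℝ} {η : E3 → ℝ}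

lemma lameDensity_cutoff_eq_zero_of_notMem_annulus {u : E3 → Fin 3 → ℝ} {x : E3} {a b r ρ : ℝ}
    (hρ : 0 < ρ) (har : a ≤ r) (hηb : tsupport η ⊆ ball 0 b) (hηa : ∀ z ∈ ball 0 a, η z = 1)
    (hLu : x ∈ ball 0 (r * ρ) → ∀ i, lame α u x i = 0)
    (hx : x ∉ ρ • {z : E3 | a ≤ ‖z‖ ∧ ‖z‖ ≤ b}) (y : E3) :
    lameDensity α (fun z k => u z k * η (ρ⁻¹ • z)) y x = 0 := by
  apply lameDensity_cutoff_eq_zero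
  rw [Set.mem_smul_set_iff_inv_smul_mem₀ hρ.ne', Set.mem_ofPred_eq, not_and_or, not_le,
    not_le] at hx
  rcases hx with hxa | hxb
  · have hxr : x ∈ ball 0 (r * ρ) := by
      rw [norm_smul, Real.norm_of_nonneg (inv_nonneg.2 hρ.le), inv_mul_lt_iff₀' hρ] at hxa
      exact mem_ball_zero_iff.2 (hxa.trans_le (by gcongr))
    exact .inl ⟨eventually_of_mem (isOpen_ball.mem_nhds (mem_ball_zero_iff.2 hxa)) hηa, hLu hxr⟩
  · exact .inr <| image_eq_zero_of_notMem_tsupport fun h =>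
      hxb.not_gt (mem_ball_zero_iff.1 (hηb h))

lemma setIntegral_lameDensity_le {Ω K : Set E3} {u w : E3 → Fin 3 → ℝ} {y : E3} {ρ C : ℝ}
    (hΩ : IsOpen Ω) (hu : IsH1On Ω u) (hK : MeasurableSet K)
    (hzero : ∀ x ∈ Ω \ K, lameDensity α w y x = 0)
    (hle : ∀ x ∈ Ω ∩ K, |lameDensity α w y x| ≤
      C * ((ρ ^ 3)⁻¹ * (sqNorm (u x) + ρ ^ 2 * frobSq (jac u x)))) :
    ∫ x in Ω, lameDensity α w y x ≤
      C * ((ρ ^ 3)⁻¹ * ∫ x in Ω ∩ K, (sqNorm (u x) + ρ ^ 2 * frobSq (jac u x))) := by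
  have henergy : IntegrableOn (fun x => sqNorm (u x) + ρ ^ 2 * frobSq (jac u x)) (Ω ∩ K) :=
    (hu.integrableOn_sqNorm.add (hu.integrableOn_frobSq_jac.const_mul _)).mono_set
      Set.inter_subset_left
  rw [← integral_const_mul, ← integral_const_mul]
  exact setIntegral_le_of_abs_le (hΩ.measurableSet.inter hK) hΩ.measurableSet
    Set.inter_subset_left ((henergy.const_mul _).const_mul C)
    (fun x hx => hzero x ⟨hx.1, fun hxK => hx.2 ⟨hx.1, hxK⟩⟩) hle

lemma exists_setIntegral_lameDensity_cutoff_le (α : ℝ) (hη : ContDiff ℝ ∞ η) {a b r : ℝ}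
    (ha : 1 < a) (har : a ≤ r) (hbr : b < r) (hηb : tsupport η ⊆ ball 0 b)
    (hηa : ∀ z ∈ ball 0 a, η z = 1) :
    ∃ C, 0 ≤ C ∧ ∀ Ω : Set E3, IsOpen Ω → ∀ ρ : ℝ, 0 < ρ → ∀ u, MemH10 Ω u →
      (∀ x ∈ Ω ∩ ball 0 (r * ρ), ∀ i, lame α u x i = 0) → ∀ y ∈ ball 0 ρ,
        ∫ x in Ω, lameDensity α (fun z k => u z k * η (ρ⁻¹ • z)) y x ≤
          C * ((ρ ^ 3)⁻¹ * ∫ x in Ω ∩ ρ • {z : E3 | a ≤ ‖z‖ ∧ ‖z‖ ≤ b},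
            (sqNorm (u x) + ρ ^ 2 * frobSq (jac u x))) := by
  have hηc : HasCompactSupport η :=
    (isCompact_closedBall 0 b).of_isClosed_subset (isClosed_tsupport η)
      (hηb.trans ball_subset_closedBall)
  obtain ⟨C, hC, hbound⟩ := exists_abs_lameDensity_cutoff_le α hη hηc (sub_pos.2 ha)
  refine ⟨C, hC, fun Ω hΩ ρ hρ u hu hLu y hy => ?_⟩
  have hmeas : MeasurableSet (ρ • {z : E3 | a ≤ ‖z‖ ∧ ‖z‖ ≤ b}) := by
    rw [smul_closedAnnulus hρ]
    exact (isClosed_closedAnnulus _ _).measurableSet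
  refine setIntegral_lameDensity_le hΩ (hu.isH1On hΩ) hmeas (fun x hx => ?_) fun x hx => ?_
  · exact lameDensity_cutoff_eq_zero_of_notMem_annulus hρ har hηb hηa
      (fun hxr => hLu x ⟨hx.1, hxr⟩) hx.2 y
  · obtain ⟨hxΩ, hxK⟩ := hx
    rw [smul_closedAnnulus hρ] at hxK
    have hxr : x ∈ ball 0 (r * ρ) := mem_ball_zero_iff.2 (hxK.2.trans_lt (by gcongr))
    have hxy : (a - 1) * ρ ≤ ‖x - y‖ := by
      linarith [norm_sub_norm_le x y, mem_ball_zero_iff.1 hy, hxK.1]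
    exact hbound ρ hρ u x y ((hu.1.contDiffAt (hΩ.mem_nhds hxΩ)).of_le
      (WithTop.coe_le_coe.2 le_top)) (hLu x ⟨hxΩ, hxr⟩) hxy

lemma exists_energy_closedAnnulus_le_mRho (hα : -1 < α) {a b : ℝ} (ha : 1 < a) (hb : b < 2) :
    ∃ C, 0 ≤ C ∧ ∀ Ω : Set E3, IsOpen Ω → ∀ ρ : ℝ, 0 < ρ → ∀ u, MemH10 Ω u →
      (∀ x ∈ Ω ∩ ball 0 (2 * ρ), ∀ i, lame α u x i = 0) →
      (ρ ^ 3)⁻¹ * ∫ x in Ω ∩ ρ • {z : E3 | a ≤ ‖z‖ ∧ ‖z‖ ≤ b},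
        (sqNorm (u x) + ρ ^ 2 * frobSq (jac u x)) ≤ C * mRho Ω ρ u := by
  obtain ⟨C, hC, hbound⟩ := exists_setIntegral_energy_le hα
    (isClosed_closedAnnulus a b) (isOpen_annulus 1 2)
    (isBounded_ball.subset fun z hz => mem_ball_zero_iff.2 hz.2)
    fun z hz => ⟨ha.trans_le hz.1, hz.2.trans_lt hb⟩
  refine ⟨C, hC, fun Ω hΩ ρ hρ u hu hLu => ?_⟩
  have henergy := hbound Ω hΩ ρ hρ u hu
  rw [smul_annulus hρ, one_mul] at henergy
  rw [mRho, mul_left_comm]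
  gcongr
  exact henergy fun x hx => hLu x ⟨hx.1, mem_ball_zero_iff.2 hx.2.2⟩

lemma mRho_nonneg (Ω : Set E3) {ρ : ℝ} (hρ : 0 < ρ) (u : E3 → Fin 3 → ℝ) : 0 ≤ mRho Ω ρ u :=
  mul_nonneg (by positivity) (integral_nonneg fun x => sqNorm_nonneg (u x))

end CutoffEnergy

/-- Local estimate: if `Lu = 0` on `Ω ∩ B_{2ρ}`, then for `y ∈ B_ρ`,
`∫_Ω [L(uη_ρ)]·(Φ(·-y) u η_ρ) dx ≤ c m_ρ(u)`, with `c` depending only on `α` and `η`. -/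
theorem lame_cutoff_energy_estimate
    (α : ℝ) (hα : -1 < α)
    (η : E3 → ℝ) (hη : ContDiff ℝ (⊤ : ℕ∞) η) (hηc : HasCompactSupport η)
    (hηs : tsupport η ⊆ ball (0 : E3) (5 / 3))
    (hη1 : ∀ x ∈ ball (0 : E3) (4 / 3), η x = 1) :
    ∃ c > (0 : ℝ), ∀ Ω : Set E3, IsOpen Ω → ∀ ρ : ℝ, 0 < ρ →
      ∀ u : E3 → Fin 3 → ℝ, MemH10 Ω u →
      (∀ x ∈ Ω ∩ ball (0 : E3) (2 * ρ), ∀ i, lame α u x i = 0) →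
      ∀ y ∈ ball (0 : E3) ρ,
        (∫ x in Ω, ∑ i, ∑ j, lame α (fun z k => u z k * η (ρ⁻¹ • z)) x i *
            Phi α (x - y) i j * (u x j * η (ρ⁻¹ • x))) ≤ c * mRho Ω ρ u := by
  obtain ⟨C₁, hC₁, hdensity⟩ := exists_setIntegral_lameDensity_cutoff_le α hη
    (by norm_num : (1 : ℝ) < 4 / 3) (by norm_num : (4 / 3 : ℝ) ≤ 2)
    (by norm_num : (5 / 3 : ℝ) < 2) hηs hη1
  obtain ⟨C₂, hC₂, henergy⟩ := exists_energy_closedAnnulus_le_mRho hα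
    (by norm_num : (1 : ℝ) < 4 / 3) (by norm_num : (5 / 3 : ℝ) < 2)
  refine ⟨C₁ * C₂ + 1, by positivity, fun Ω hΩ ρ hρ u hu hLu y hy => ?_⟩
  calc ∫ x in Ω, lameDensity α (fun z k => u z k * η (ρ⁻¹ • z)) y x
      ≤ C₁ * (C₂ * mRho Ω ρ u) :=
        (hdensity Ω hΩ ρ hρ u hu hLu y hy).trans
          (mul_le_mul_of_nonneg_left (henergy Ω hΩ ρ hρ u hu hLu) hC₁)
    _ ≤ (C₁ * C₂ + 1) * mRho Ω ρ u := by
        linarith [mRho_nonneg Ω hρ u]
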